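/- Poincaré–Friedrichs with boundary term: Let 𝒯_h be a shape-regular triangulation of a bounded polygon Ω with shape regularity constant 𝒦. There is a constant C depending only on Ω and 𝒦 such that for every u ∈ H¹_h, ‖u‖²_{L²(Ω)} ≤ C (∫_{Ω_h}|∇u|² + Σ_{e∈ℰ⁰_h}|e|⁻¹∫_e[u]² + ∫_{∂Ω}u²). -/

import Mathlib

open MeasureTheory Set
open scoped Classical

noncomputable section

abbrev Pt : Type := EuclideanSpace ℝ (Fin 2)

structure Tri where
  A : Pt
  B : Pt
  C : Pt

namespace Tri

def cross (t : Tri) : ℝ :=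
  (t.B 0 - t.A 0) * (t.C 1 - t.A 1) - (t.B 1 - t.A 1) * (t.C 0 - t.A 0)

/-- Non-degeneracy (the three vertices are not collinear). -/
def Nondeg (t : Tri) : Prop := t.cross ≠ 0

def area (t : Tri) : ℝ := |t.cross| / 2

def la (t : Tri) : ℝ := dist t.B t.C
def lb (t : Tri) : ℝ := dist t.A t.C
def lc (t : Tri) : ℝ := dist t.A t.B

/-- Inradius of a triangle: `r = 2·Area/(a+b+c)`. -/
def inradius (t : Tri) : ℝ := 2 * t.area / (t.la + t.lb + t.lc)

/-- Circumradius of a triangle: `R = abc/(4·Area)`. -/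
def circumradius (t : Tri) : ℝ := t.la * t.lb * t.lc / (4 * t.area)

/-- Shape regularity constant `R/r` of a triangle. -/
def shapeReg (t : Tri) : ℝ := t.circumradius / t.inradius

def closedHull (t : Tri) : Set Pt := convexHull ℝ {t.A, t.B, t.C}

def openHull (t : Tri) : Set Pt := interior t.closedHull

def edgeList (t : Tri) : List (Pt × Pt) := [(t.A, t.B), (t.B, t.C), (t.C, t.A)]

end Tri

/-- Two (oriented) edges coincide as unoriented segments. -/
def SameEdge (e e' : Pt × Pt) : Prop := e' = e ∨ e' = (e.2, e.1)

/-- Arclength integral of `f` over the straight segment from `p` to `q`. -/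
def segInt (p q : Pt) (f : Pt → ℝ) : ℝ :=
  dist p q * ∫ s in (0:ℝ)..1, f (p + s • (q - p))

/-- A bounded polygonal domain in the plane. -/
def IsPolygon (Ω : Set Pt) : Prop :=
  Ω.Nonempty ∧ Bornology.IsBounded Ω ∧
    ∃ S : Finset Tri, (∀ t ∈ S, t.Nondeg) ∧ Ω = interior (⋃ t ∈ S, t.closedHull)

/-- A (conforming) triangulation of the polygonal domain `Ω`. -/
structure Triangulation (Ω : Set Pt) where
  tris : Finset Tri
  nondeg : ∀ t ∈ tris, t.Nondeg
  cover : Ω = interior (⋃ t ∈ tris, t.closedHull)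
  disj : ∀ t ∈ tris, ∀ t' ∈ tris, t ≠ t' → t.openHull ∩ t'.openHull = ∅
  conforming : ∀ t ∈ tris, ∀ e ∈ t.edgeList,
      segment ℝ e.1 e.2 ⊆ frontier Ω ∨
      ∃ t' ∈ tris, t' ≠ t ∧ ∃ e' ∈ t'.edgeList, SameEdge e e'

namespace Triangulation

variable {Ω : Set Pt}

/-- All triangles have shape regularity constant at most `K`. -/
def ShapeRegular (T : Triangulation Ω) (K : ℝ) : Prop :=
  ∀ t ∈ T.tris, t.shapeReg ≤ K

/-- `‖u‖²_{L²(Ω)}` of a piecewise function. -/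
def sqL2 (T : Triangulation Ω) (u : Tri → Pt → ℝ) : ℝ :=
  ∑ t ∈ T.tris, ∫ x in t.openHull, (u t x) ^ 2

/-- `∫_{Ω_h} |∇u|²` of a piecewise function. -/
def gradSq (T : Triangulation Ω) (u : Tri → Pt → ℝ) : ℝ :=
  ∑ t ∈ T.tris, ∫ x in t.openHull, ‖fderiv ℝ (u t) x‖ ^ 2

/-- Contribution `Σ_{e shared by t₁,t₂} |e|⁻¹ ∫_e [u]²` of the common edges of `t₁, t₂`. -/
def edgeJump (u : Tri → Pt → ℝ) (t₁ t₂ : Tri) : ℝ :=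
  ((t₁.edgeList.map fun e =>
    if ∃ e' ∈ t₂.edgeList, SameEdge e e' then
      (dist e.1 e.2)⁻¹ * segInt e.1 e.2 (fun x => (u t₁ x - u t₂ x) ^ 2)
    else 0)).sum

/-- `Σ_{e ∈ ℰ⁰_h} |e|⁻¹ ∫_e [u]²` (each interior edge counted once, whence the `1/2`). -/
def jumpSq (T : Triangulation Ω) (u : Tri → Pt → ℝ) : ℝ :=
  (1/2) * ∑ t₁ ∈ T.tris, ∑ t₂ ∈ T.tris, if t₁ ≠ t₂ then edgeJump u t₁ t₂ else 0

/-- The squared `H¹_h` norm. -/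
def normSq (T : Triangulation Ω) (u : Tri → Pt → ℝ) : ℝ :=
  T.sqL2 u + T.gradSq u + T.jumpSq u

/-- `∫_{∂Ω} u²` via the traces from the triangles having a boundary edge. -/
def bdrySq (T : Triangulation Ω) (u : Tri → Pt → ℝ) : ℝ :=
  ∑ t ∈ T.tris, ((t.edgeList.map fun e =>
    if segment ℝ e.1 e.2 ⊆ frontier Ω then segInt e.1 e.2 (fun x => (u t x) ^ 2) else 0)).sum

/-- `u` is a piecewise `H¹` function subordinate to the triangulation. -/
def PwH1 (T : Triangulation Ω) (u : Tri → Pt → ℝ) : Prop :=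
  ∀ t ∈ T.tris, ContinuousOn (u t) t.closedHull ∧ DifferentiableOn ℝ (u t) t.openHull ∧
    IntegrableOn (fun x => (u t x) ^ 2) t.openHull ∧
    IntegrableOn (fun x => ‖fderiv ℝ (u t) x‖ ^ 2) t.openHull

/-- `v : ℝ² → ℝ` is the extension by zero of the piecewise function `u`. -/
def Glues (T : Triangulation Ω) (u : Tri → Pt → ℝ) (v : Pt → ℝ) : Prop :=
  (∀ t ∈ T.tris, ∀ x ∈ t.openHull, v x = u t x) ∧ ∀ x, x ∉ Ω → v x = 0

end Triangulation


def cr3 (x y z : Pt) : ℝ := (y 0 - x 0) * (z 1 - x 1) - (y 1 - x 1) * (z 0 - x 0)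

def cr0 (y z : Pt) : ℝ := y 0 * z 1 - y 1 * z 0

lemma mem_hull_iff (t : Tri) (h : t.Nondeg) (x : Pt) :
    x ∈ t.closedHull ↔ 0 ≤ cr3 x t.B t.C / t.cross ∧ 0 ≤ cr3 t.A x t.C / t.cross ∧
      0 ≤ cr3 t.A t.B x / t.cross := by
  have h' : t.cross ≠ 0 := h
  unfold Tri.closedHull
  rw [convexHull_insert ⟨t.B, by simp⟩, convexHull_pair]
  simp only [mem_convexJoin, mem_singleton_iff, exists_eq_left]
  constructor
  · rintro ⟨y, ⟨a, b, ha, hb, hab, rfl⟩, ⟨c, d, hc, hd, hcd, rfl⟩⟩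
    have e1 : cr3 (c • t.A + d • (a • t.B + b • t.C)) t.B t.C = c * t.cross := by
      obtain rfl : a = 1 - b := by linarith
      obtain rfl : c = 1 - d := by linarith
      simp [cr3, Tri.cross]; ring
    have e2 : cr3 t.A (c • t.A + d • (a • t.B + b • t.C)) t.C = d * a * t.cross := by
      obtain rfl : a = 1 - b := by linarith
      obtain rfl : c = 1 - d := by linarith
      simp [cr3, Tri.cross]; ring
    have e3 : cr3 t.A t.B (c • t.A + d • (a • t.B + b • t.C)) = d * b * t.cross := by
      obtain rfl : a = 1 - b := by linarith
      obtain rfl : c = 1 - d := by linarith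
      simp [cr3, Tri.cross]; ring
    rw [e1, e2, e3]
    simp only [mul_div_assoc, div_self h', mul_one]
    refine ⟨hc, by positivity, by positivity⟩
  · rintro ⟨h1, h2, h3⟩
    set l1 := cr3 x t.B t.C / t.cross with hl1
    set l2 := cr3 t.A x t.C / t.cross with hl2
    set l3 := cr3 t.A t.B x / t.cross with hl3
    have hs : l1 + l2 + l3 = 1 := by
      rw [hl1, hl2, hl3]; field_simp; simp [cr3, Tri.cross]; ring
    have hx : x = l1 • t.A + l2 • t.B + l3 • t.C := by
      ext i; fin_cases i
      · simp [hl1, hl2, hl3]; field_simp; simp [cr3, Tri.cross]; ring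
      · simp [hl1, hl2, hl3]; field_simp; simp [cr3, Tri.cross]; ring
    clear_value l1 l2 l3
    by_cases hz : l2 + l3 = 0
    · have : l2 = 0 := by linarith
      have : l3 = 0 := by linarith
      have : l1 = 1 := by linarith
      subst_vars
      exact ⟨t.B, left_mem_segment _ _ _, by simpa using left_mem_segment _ _ _⟩
    · have hp : 0 < l2 + l3 := lt_of_le_of_ne (by positivity) (Ne.symm hz)
      refine ⟨(l2/(l2+l3)) • t.B + (l3/(l2+l3)) • t.C, ⟨_, _, by positivity, by positivity, by field_simp, rfl⟩,
        ⟨l1, l2+l3, h1, hp.le, by linarith, ?_⟩⟩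
      rw [hx, smul_add, smul_smul, smul_smul, mul_div_cancel₀ _ hz, mul_div_cancel₀ _ hz, add_assoc]

lemma cont_cr3_1 (y z : Pt) : Continuous fun x => cr3 x y z := by unfold cr3; fun_prop
lemma cont_cr3_2 (y z : Pt) : Continuous fun x => cr3 y x z := by unfold cr3; fun_prop
lemma cont_cr3_3 (y z : Pt) : Continuous fun x => cr3 y z x := by unfold cr3; fun_prop

lemma pos_of_int (l : Pt → ℝ) (S : Set Pt) (P x : Pt) (hS : ∀ y ∈ S, 0 ≤ l y)
    (hl : ∀ d : ℝ, l (x + d • (x - P)) = l x + d * (l x - 1)) (hx : x ∈ interior S) : 0 < l x := by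
  refine lt_of_le_of_ne (hS x (interior_subset hx)) (fun h0 => ?_)
  have hc : Continuous fun d : ℝ => x + d • (x - P) := by fun_prop
  have : ∀ᶠ d in nhds (0:ℝ), x + d • (x - P) ∈ S := by
    have := hc.continuousAt.preimage_mem_nhds (x := (0:ℝ)) (t := S)
      (by simpa using mem_interior_iff_mem_nhds.1 hx)
    exact this
  obtain ⟨ε, hε, H⟩ := Metric.eventually_nhds_iff.1 this
  have := hS _ (H (y := ε/2) (by simp [abs_of_pos hε]; linarith))
  rw [hl, ← h0] at this
  linarith

lemma mem_open_iff (t : Tri) (h : t.Nondeg) (x : Pt) :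
    x ∈ t.openHull ↔ 0 < cr3 x t.B t.C / t.cross ∧ 0 < cr3 t.A x t.C / t.cross ∧
      0 < cr3 t.A t.B x / t.cross := by
  have h' : t.cross ≠ 0 := h
  constructor
  · intro hx
    refine ⟨pos_of_int (fun x => cr3 x t.B t.C / t.cross) t.closedHull t.A x (fun y hy => ((mem_hull_iff t h y).1 hy).1) ?_ hx,
      pos_of_int (fun x => cr3 t.A x t.C / t.cross) t.closedHull t.B x (fun y hy => ((mem_hull_iff t h y).1 hy).2.1) ?_ hx,
      pos_of_int (fun x => cr3 t.A t.B x / t.cross) t.closedHull t.C x (fun y hy => ((mem_hull_iff t h y).1 hy).2.2) ?_ hx⟩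
    all_goals
      intro d; field_simp; simp [cr3, Tri.cross]; ring
  · intro hx
    have : IsOpen {x | 0 < cr3 x t.B t.C / t.cross ∧ 0 < cr3 t.A x t.C / t.cross ∧
      0 < cr3 t.A t.B x / t.cross} := by
      have c1 := (cont_cr3_1 t.B t.C).div_const t.cross
      have c2 := (cont_cr3_2 t.A t.C).div_const t.cross
      have c3 := (cont_cr3_3 t.A t.B).div_const t.cross
      exact (isOpen_lt continuous_const c1).inter ((isOpen_lt continuous_const c2).inter (isOpen_lt continuous_const c3))
    refine interior_maximal ?_ this hx
    rintro y ⟨h1, h2, h3⟩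
    exact (mem_hull_iff t h y).2 ⟨h1.le, h2.le, h3.le⟩

/-- rotations: the edge opposite to the first vertex -/
def rotT (t : Tri) : Fin 3 → Tri := ![⟨t.C, t.A, t.B⟩, t, ⟨t.B, t.C, t.A⟩]

def eP (t : Tri) (i : Fin 3) : Pt := (rotT t i).A
def eQ (t : Tri) (i : Fin 3) : Pt := (rotT t i).B
def eR (t : Tri) (i : Fin 3) : Pt := (rotT t i).C

lemma rot_cross (t : Tri) (i : Fin 3) : (rotT t i).cross = t.cross := by
  fin_cases i <;> simp [rotT, Tri.cross] <;> ring

lemma rot_hull (t : Tri) (i : Fin 3) : (rotT t i).closedHull = t.closedHull := by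
  unfold Tri.closedHull
  congr 1
  fin_cases i <;> simp [rotT] <;> ext x <;> simp <;> tauto

lemma rot_open (t : Tri) (i : Fin 3) : (rotT t i).openHull = t.openHull := by
  unfold Tri.openHull; rw [rot_hull]

lemma list_sum (t : Tri) (f : Pt × Pt → ℝ) :
    (t.edgeList.map f).sum = ∑ i : Fin 3, f (eQ t i, eR t i) := by
  simp [Tri.edgeList, Fin.sum_univ_three, eQ, eR, rotT]; ring

lemma mem_edgeList (t : Tri) (e : Pt × Pt) : e ∈ t.edgeList ↔ ∃ i, e = (eQ t i, eR t i) := by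
  simp [Tri.edgeList, Fin.exists_fin_succ, eQ, eR, rotT]

lemma edges_inj (t : Tri) (h : t.Nondeg) (i j : Fin 3)
    (hs : SameEdge (eQ t i, eR t i) (eQ t j, eR t j)) : i = j := by
  have h' : t.cross ≠ 0 := h
  have h1 : t.A ≠ t.B := by rintro e; apply h'; simp [Tri.cross, e]
  have h2 : t.A ≠ t.C := by rintro e; apply h'; simp [Tri.cross, e]
  have h3 : t.B ≠ t.C := by rintro e; apply h'; simp [Tri.cross, e]; ring
  fin_cases i <;> fin_cases j <;> simp [SameEdge, eQ, eR, rotT, h1, h2, h3, h1.symm, h2.symm, h3.symm] at hs ⊢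

/-- two triangles on the same side of a common edge overlap -/
lemma overlap (P P' Q R : Pt) (t t' : Tri) (ht : t = ⟨P, Q, R⟩) (ht' : t' = ⟨P', Q, R⟩)
    (hs : 0 < t.cross * t'.cross) : (t.openHull ∩ t'.openHull).Nonempty := by
  have n : t.cross ≠ 0 := by rintro e; simp [e] at hs
  have n' : t'.cross ≠ 0 := by rintro e; simp [e] at hs
  let m : ℝ → Pt := fun d => (d) • P + ((1-d)/2) • Q + ((1-d)/2) • R
  have hm : Continuous m := by fun_prop
  have c2 := ((cont_cr3_2 t'.A t'.C).comp hm).div_const t'.cross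
  have c3 := ((cont_cr3_3 t'.A t'.B).comp hm).div_const t'.cross
  have e2 : ∀ᶠ d in nhds (0:ℝ), 0 < cr3 t'.A (m d) t'.C / t'.cross := by
    refine c2.continuousAt.eventually_mem (lt_mem_nhds ?_)
    have : cr3 t'.A (m 0) t'.C / t'.cross = 1/2 := by
      field_simp; subst ht'; simp [cr3, Tri.cross, m]; ring
    simp [this]
  have e3 : ∀ᶠ d in nhds (0:ℝ), 0 < cr3 t'.A t'.B (m d) / t'.cross := by
    refine c3.continuousAt.eventually_mem (lt_mem_nhds ?_)
    have : cr3 t'.A t'.B (m 0) / t'.cross = 1/2 := by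
      field_simp; subst ht'; simp [cr3, Tri.cross, m]; ring
    simp [this]
  obtain ⟨ε, hε, H⟩ := Metric.eventually_nhds_iff.1 (e2.and e3)
  set d := min (ε/2) (1/2) with hd
  have hd0 : 0 < d := by positivity
  have hd1 : d ≤ 1/2 := min_le_right _ _
  have hd2 : d ≤ ε/2 := min_le_left _ _
  obtain ⟨p2, p3⟩ := H (y := d) (by simp [abs_of_pos hd0]; linarith)
  have hpos : 0 < t.cross / t'.cross := by
    rcases mul_pos_iff.1 hs with ⟨a, b⟩ | ⟨a, b⟩
    · exact div_pos a b
    · exact div_pos_of_neg_of_neg a b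
  refine ⟨m d, (mem_open_iff t n _).2 ⟨?_, ?_, ?_⟩, (mem_open_iff t' n' _).2 ⟨?_, p2, p3⟩⟩
  · have : cr3 (m d) t.B t.C / t.cross = d := by
      field_simp; subst ht; simp [cr3, Tri.cross, m]; ring
    rw [this]; exact hd0
  · have : cr3 t.A (m d) t.C / t.cross = (1-d)/2 := by
      field_simp; subst ht; simp [cr3, Tri.cross, m]; ring
    rw [this]; linarith
  · have : cr3 t.A t.B (m d) / t.cross = (1-d)/2 := by
      field_simp; subst ht; simp [cr3, Tri.cross, m]; ring
    rw [this]; linarith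
  · have : cr3 (m d) t'.B t'.C / t'.cross = d * (t.cross / t'.cross) := by
      field_simp; subst ht ht'; simp [cr3, Tri.cross, m]; ring
    rw [this]; positivity

def swapT (t : Tri) : Tri := ⟨t.A, t.C, t.B⟩
lemma swap_cross (t : Tri) : (swapT t).cross = -t.cross := by simp [swapT, Tri.cross]; ring
lemma swap_open (t : Tri) : (swapT t).openHull = t.openHull := by
  unfold Tri.openHull Tri.closedHull swapT
  congr 2; ext x; simp; tauto

def sgnT (t : Tri) : ℝ := |t.cross| / t.cross

def wt (t : Tri) (i : Fin 3) : ℝ := sgnT t * cr0 (eQ t i) (eR t i)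

lemma sgn_cases (t : Tri) (h : t.Nondeg) : (0 < t.cross ∧ sgnT t = 1) ∨ (t.cross < 0 ∧ sgnT t = -1) := by
  have h' : t.cross ≠ 0 := h
  unfold sgnT
  rcases lt_or_gt_of_ne h' with h | h
  · right; refine ⟨h, ?_⟩; rw [abs_of_neg h]; field_simp
  · left; refine ⟨h, ?_⟩; rw [abs_of_pos h]; field_simp

lemma opp_same (t t' : Tri) (h : t.Nondeg) (h' : t'.Nondeg) (hd : t.openHull ∩ t'.openHull = ∅)
    (i j : Fin 3) (hQ : eQ t' j = eQ t i) (hR : eR t' j = eR t i) : sgnT t' = - sgnT t := by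
  have := overlap (eP t i) (eP t' j) (eQ t i) (eR t i) (rotT t i) (rotT t' j) rfl
    (by rw [← hQ, ← hR]; rfl)
  rw [rot_open, rot_open, hd, rot_cross, rot_cross] at this
  have : ¬ 0 < t.cross * t'.cross := fun h => by simpa using this h
  rcases sgn_cases t h with ⟨a, b⟩ | ⟨a, b⟩ <;> rcases sgn_cases t' h' with ⟨c, d⟩ | ⟨c, d⟩ <;> rw [b, d]
  · exact absurd (mul_pos a c) this
  · simp
  · exact absurd (mul_pos_of_neg_of_neg a c) this

lemma opp_swap (t t' : Tri) (h : t.Nondeg) (h' : t'.Nondeg) (hd : t.openHull ∩ t'.openHull = ∅)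
    (i j : Fin 3) (hQ : eQ t' j = eR t i) (hR : eR t' j = eQ t i) : sgnT t' = sgnT t := by
  have := overlap (eP t i) (eP t' j) (eQ t i) (eR t i) (rotT t i) (swapT (rotT t' j)) rfl
    (by rw [← hQ, ← hR]; rfl)
  rw [swap_open, swap_cross, rot_open, rot_open, hd, rot_cross, rot_cross] at this
  have : ¬ t.cross * t'.cross < 0 := fun h => by simpa using this (by linarith)
  rcases sgn_cases t h with ⟨a, b⟩ | ⟨a, b⟩ <;> rcases sgn_cases t' h' with ⟨c, d⟩ | ⟨c, d⟩ <;> rw [b, d]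
  · exact absurd (mul_neg_of_pos_of_neg a c) this
  · exact absurd (mul_neg_of_neg_of_pos a c) this

lemma wt_opp (t t' : Tri) (h : t.Nondeg) (h' : t'.Nondeg) (hd : t.openHull ∩ t'.openHull = ∅)
    (i j : Fin 3) (hs : SameEdge (eQ t i, eR t i) (eQ t' j, eR t' j)) : wt t' j = - wt t i := by
  unfold wt
  rcases hs with hs | hs
  · obtain ⟨a, b⟩ := Prod.ext_iff.1 hs
    rw [opp_same t t' h h' hd i j a b, show eQ t' j = _ from a, show eR t' j = _ from b]; ring
  · obtain ⟨a, b⟩ := Prod.ext_iff.1 hs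
    rw [opp_swap t t' h h' hd i j a b, show eQ t' j = _ from a, show eR t' j = _ from b]
    simp [cr0]; ring

lemma sameEdge_symm {e e' : Pt × Pt} (h : SameEdge e e') : SameEdge e' e := by
  rcases h with rfl | rfl
  · left; rfl
  · right; rfl

lemma three_excl (t t' t'' : Tri) (h : t.Nondeg) (h' : t'.Nondeg) (h'' : t''.Nondeg)
    (d1 : t.openHull ∩ t'.openHull = ∅) (d2 : t.openHull ∩ t''.openHull = ∅)
    (d3 : t'.openHull ∩ t''.openHull = ∅) (i j k : Fin 3)
    (s1 : SameEdge (eQ t i, eR t i) (eQ t' j, eR t' j))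
    (s2 : SameEdge (eQ t i, eR t i) (eQ t'' k, eR t'' k)) : False := by
  have key : ∀ s s' : ℝ, (s = 1 ∨ s = -1) → s' = -s → s' = s → False := by
    rintro s s' (rfl | rfl) h1 h2 <;> linarith
  have sc : ∀ t : Tri, t.Nondeg → (sgnT t = 1 ∨ sgnT t = -1) := fun t h => by
    rcases sgn_cases t h with ⟨_, h⟩ | ⟨_, h⟩ <;> simp [h]
  rcases s1 with s1 | s1 <;> rcases s2 with s2 | s2 <;> obtain ⟨a, b⟩ := Prod.ext_iff.1 s1 <;>
    obtain ⟨c, d⟩ := Prod.ext_iff.1 s2 <;> dsimp only at a b c d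
  · have e1 := opp_same t t' h h' d1 i j a b
    have e2 := opp_same t t'' h h'' d2 i k c d
    have e3 := opp_same t' t'' h' h'' d3 j k (c.trans a.symm) (d.trans b.symm)
    exact key _ _ (sc t' h') e3 (e2.trans e1.symm)
  · have e1 := opp_same t t' h h' d1 i j a b
    have e2 := opp_swap t t'' h h'' d2 i k c d
    have e3 := opp_swap t' t'' h' h'' d3 j k (c.trans b.symm) (d.trans a.symm)
    exact key _ _ (sc t h) e1 (e3.symm.trans e2)
  · have e1 := opp_swap t t' h h' d1 i j a b
    have e2 := opp_same t t'' h h'' d2 i k c d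
    have e3 := opp_swap t' t'' h' h'' d3 j k (c.trans b.symm) (d.trans a.symm)
    exact key _ _ (sc t h) e2 (e3.trans e1)
  · have e1 := opp_swap t t' h h' d1 i j a b
    have e2 := opp_swap t t'' h h'' d2 i k c d
    have e3 := opp_same t' t'' h' h'' d3 j k (c.trans a.symm) (d.trans b.symm)
    exact key _ _ (sc t' h') e3 (e2.trans e1.symm)

lemma cr0_sq (y z : Pt) : |cr0 y z| ≤ ‖y‖ * ‖z‖ := by
  apply abs_le_of_sq_le_sq _ (by positivity)
  rw [mul_pow, EuclideanSpace.norm_sq_eq, EuclideanSpace.norm_sq_eq]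
  simp [Fin.sum_univ_two, cr0]
  nlinarith [sq_nonneg (y 0 * z 0 + y 1 * z 1)]

lemma wt_le (t : Tri) (h : t.Nondeg) (i : Fin 3) (M : ℝ) (hM : ‖eQ t i‖ ≤ M) :
    |wt t i| ≤ M * dist (eQ t i) (eR t i) := by
  have : |sgnT t| = 1 := by rcases sgn_cases t h with ⟨_, h⟩ | ⟨_, h⟩ <;> simp [h]
  unfold wt
  rw [abs_mul, this, one_mul, show cr0 (eQ t i) (eR t i) = cr0 (eQ t i) (eR t i - eQ t i) by simp [cr0]; ring,
    dist_comm, dist_eq_norm]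
  exact (cr0_sq _ _).trans (by gcongr)

lemma edge_pos (t : Tri) (h : t.Nondeg) (i : Fin 3) : 0 < dist (eQ t i) (eR t i) := by
  rw [dist_pos]
  intro e
  apply h
  rw [← rot_cross t i]
  change cr3 (eP t i) (eQ t i) (eR t i) = 0
  rw [e]; simp [cr3]; ring

lemma shape_core (t : Tri) (h : t.Nondeg) (K : ℝ) (hK : t.shapeReg ≤ K) :
    t.la ^ 2 ≤ 2 * K * |t.cross| ∧ t.lb ^ 2 ≤ 2 * K * |t.cross| ∧ t.lc ^ 2 ≤ 2 * K * |t.cross| := by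
  have h' : 0 < |t.cross| := abs_pos.2 h
  have a0 : 0 < t.la := edge_pos t h 1
  have c0 : 0 < t.lc := edge_pos t h 0
  have b0 : 0 < t.lb := by have := edge_pos t h 2; rwa [dist_comm] at this
  have s1 : |t.cross| ≤ t.lb * t.lc := by
    have := cr0_sq (t.B - t.A) (t.C - t.A)
    rw [← dist_eq_norm, ← dist_eq_norm, dist_comm, dist_comm t.C] at this
    calc |t.cross| = _ := rfl
      _ ≤ _ := this
      _ = _ := by unfold Tri.lb Tri.lc; ring
  have s2 : |t.cross| ≤ t.lc * t.la := by
    have := cr0_sq (t.C - t.B) (t.A - t.B)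
    rw [← dist_eq_norm, ← dist_eq_norm, dist_comm t.C] at this
    convert this using 1
    · congr 1; simp [cr0, Tri.cross]; ring
    unfold Tri.la Tri.lc; ring
  have s3 : |t.cross| ≤ t.la * t.lb := by
    have := cr0_sq (t.A - t.C) (t.B - t.C)
    rw [← dist_eq_norm, ← dist_eq_norm] at this
    convert this using 1
    · congr 1; simp [cr0, Tri.cross]; ring
    unfold Tri.la Tri.lb; ring
  unfold Tri.shapeReg Tri.circumradius Tri.inradius Tri.area at hK
  have e : t.la * t.lb * t.lc / (4 * (|t.cross| / 2)) / (2 * (|t.cross| / 2) / (t.la + t.lb + t.lc))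
    = t.la * t.lb * t.lc * (t.la + t.lb + t.lc) / (2 * |t.cross|^2) := by
    field_simp; norm_num
  rw [e, div_le_iff₀ (by positivity)] at hK
  generalize |t.cross| = S at *
  generalize t.la = a at *
  generalize t.lb = b at *
  generalize t.lc = c at *
  have key : ∀ a b c : ℝ, 0 < a → 0 < b → 0 < c → S ≤ b * c →
     a * b * c * (a + b + c) ≤ K * (2 * S^2) → a ^ 2 ≤ 2 * K * S := by
    intro a b c a0 b0 c0 s hK
    have K0 : 0 < K := by
      have : 0 < K * (2 * S^2) := lt_of_lt_of_le (by positivity) hK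
      exact pos_of_mul_pos_left this (by positivity)
    have h1 : K * (2 * S^2) ≤ K * (2 * (S * (b * c))) := by
      rw [sq]; gcongr
    have h2 : a * (a + b + c) * (b * c) ≤ 2 * K * S * (b * c) := by nlinarith
    have h3 := le_of_mul_le_mul_right h2 (by positivity)
    nlinarith [mul_pos a0 b0, mul_pos a0 c0]
  refine ⟨key a b c a0 b0 c0 s1 hK, key b c a b0 c0 a0 s2 (by linarith), key c a b c0 a0 b0 s3 (by linarith)⟩

lemma shape_edge (t : Tri) (h : t.Nondeg) (K : ℝ) (hK : t.shapeReg ≤ K) (i : Fin 3) :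
    dist (eQ t i) (eR t i) ^ 2 ≤ 2 * K * |t.cross| := by
  obtain ⟨h1, h2, h3⟩ := shape_core t h K hK
  fin_cases i
  · exact h3
  · exact h1
  · unfold Tri.lb at h2; rw [dist_comm] at h2; exact h2


def psi : Pt ≃ᵐ ℝ × ℝ := (MeasurableEquiv.toLp 2 (Fin 2 → ℝ)).symm.trans MeasurableEquiv.finTwoArrow

lemma psi_mp : MeasurePreserving psi :=
  (EuclideanSpace.volume_preserving_symm_measurableEquiv_toLp (Fin 2)).trans
    (volume_preserving_finTwoArrow ℝ)

lemma psi_apply (x : Pt) : psi x = (x 0, x 1) := rfl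

/-- Duffy parametrisation -/
def duf (t : Tri) (z : ℝ × ℝ) : Pt := t.A + z.2 • ((t.B + z.1 • (t.C - t.B)) - t.A)

def dufC (t : Tri) (z : ℝ × ℝ) : ℝ × ℝ :=
  (t.A 0 + z.2 * ((t.B 0 + z.1 * (t.C 0 - t.B 0)) - t.A 0),
   t.A 1 + z.2 * ((t.B 1 + z.1 * (t.C 1 - t.B 1)) - t.A 1))

lemma psi_duf (t : Tri) (z : ℝ × ℝ) : psi (duf t z) = dufC t z := by
  simp [psi_apply, duf, dufC]

def dufD (t : Tri) (z : ℝ × ℝ) : ℝ × ℝ →L[ℝ] ℝ × ℝ :=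
  (Matrix.toLin (.finTwoProd ℝ) (.finTwoProd ℝ)
    !![z.2 * (t.C 0 - t.B 0), (t.B 0 + z.1 * (t.C 0 - t.B 0)) - t.A 0;
       z.2 * (t.C 1 - t.B 1), (t.B 1 + z.1 * (t.C 1 - t.B 1)) - t.A 1]).toContinuousLinearMap

lemma dufD_det (t : Tri) (z : ℝ × ℝ) : (dufD t z).det = - (z.2 * t.cross) := by
  unfold dufD
  simp only [LinearMap.det_toContinuousLinearMap, LinearMap.det_toLin, Matrix.det_fin_two_of, Tri.cross]
  ring

lemma dufD_has (t : Tri) (z : ℝ × ℝ) : HasFDerivAt (dufC t) (dufD t z) z := by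
  unfold dufD
  rw [Matrix.toLin_finTwoProd_toContinuousLinearMap]
  have h : ∀ a b c : ℝ, HasFDerivAt (fun z : ℝ × ℝ => a + z.2 * ((b + z.1 * (c - b)) - a))
     ((z.2 * (c - b)) • ContinuousLinearMap.fst ℝ ℝ ℝ + ((b + z.1 * (c - b)) - a) • ContinuousLinearMap.snd ℝ ℝ ℝ) z := by
    intro a b c
    have h1 : HasFDerivAt (fun z : ℝ × ℝ => (b + z.1 * (c - b)) - a) ((c - b) • ContinuousLinearMap.fst ℝ ℝ ℝ) z :=
      ((hasFDerivAt_fst.mul_const (c - b)).const_add b).sub_const a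
    have h2 := ((hasFDerivAt_snd (𝕜 := ℝ) (p := z)).mul h1).const_add a
    convert! h2 using 1
    ext <;> simp
  exact (h _ _ _).prodMk (h _ _ _)

def sq01 : Set (ℝ × ℝ) := Ioo 0 1 ×ˢ Ioo 0 1

lemma duf_inj (t : Tri) (h : t.Nondeg) : InjOn (dufC t) sq01 := by
  have h' : t.cross ≠ 0 := h
  rintro ⟨s, r⟩ ⟨hs, hr⟩ ⟨s', r'⟩ ⟨hs', hr'⟩ he
  simp only [dufC, Prod.mk.injEq] at he
  obtain ⟨e1, e2⟩ := he
  have k1 : r * t.cross = r' * t.cross := by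
    unfold Tri.cross
    linear_combination (t.C 1 - t.B 1) * e1 - (t.C 0 - t.B 0) * e2
  have hrr : r = r' := mul_right_cancel₀ h' k1
  subst hrr
  have k2 : r * s * t.cross = r * s' * t.cross := by
    unfold Tri.cross
    linear_combination - (t.B 1 - t.A 1) * e1 + (t.B 0 - t.A 0) * e2
  have := mul_left_cancel₀ hr.1.ne' (mul_right_cancel₀ h' k2)
  rw [this]

lemma duf_image (t : Tri) (h : t.Nondeg) : duf t '' sq01 = t.openHull := by
  have h' : t.cross ≠ 0 := h
  ext x
  rw [mem_open_iff t h]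
  constructor
  · rintro ⟨⟨s, r⟩, ⟨⟨hs, hs1⟩, ⟨hr, hr1⟩⟩, rfl⟩
    dsimp only at hs hs1 hr hr1
    have e1 : cr3 (duf t (s, r)) t.B t.C / t.cross = 1 - r := by
      field_simp; simp [cr3, Tri.cross, duf]; ring
    have e2 : cr3 t.A (duf t (s, r)) t.C / t.cross = r * (1 - s) := by
      field_simp; simp [cr3, Tri.cross, duf]; ring
    have e3 : cr3 t.A t.B (duf t (s, r)) / t.cross = r * s := by
      field_simp; simp [cr3, Tri.cross, duf]; ring
    rw [e1, e2, e3]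
    exact ⟨by linarith, mul_pos hr (by linarith), mul_pos hr hs⟩
  · rintro ⟨h1, h2, h3⟩
    set l1 := cr3 x t.B t.C / t.cross with hl1
    set l2 := cr3 t.A x t.C / t.cross with hl2
    set l3 := cr3 t.A t.B x / t.cross with hl3
    have hs : l1 + l2 + l3 = 1 := by
      rw [hl1, hl2, hl3]; field_simp; simp [cr3, Tri.cross]; ring
    have hx : x = l1 • t.A + l2 • t.B + l3 • t.C := by
      ext i; fin_cases i
      · simp [hl1, hl2, hl3]; field_simp; simp [cr3, Tri.cross]; ring
      · simp [hl1, hl2, hl3]; field_simp; simp [cr3, Tri.cross]; ring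
    clear_value l1 l2 l3
    have hp : 0 < l2 + l3 := by positivity
    refine ⟨(l3 / (l2 + l3), l2 + l3), ⟨⟨by positivity, ?_⟩, hp, ?_⟩, ?_⟩
    · rw [div_lt_one hp]; linarith
    · dsimp only; linarith
    · obtain rfl : l1 = 1 - (l2 + l3) := by linarith
      rw [hx]
      ext i; simp [duf]; field_simp; ring

lemma sq01_meas : MeasurableSet sq01 := measurableSet_Ioo.prod measurableSet_Ioo

lemma psi_image (t : Tri) (h : t.Nondeg) : psi '' t.openHull = dufC t '' sq01 := by
  rw [← duf_image t h, image_image]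
  simp only [psi_duf]

lemma psi_symm_dufC (t : Tri) (z : ℝ × ℝ) : psi.symm (dufC t z) = duf t z := by
  rw [← psi_duf]; simp

lemma duffy_integrable (t : Tri) (h : t.Nondeg) (F : Pt → ℝ) (hF : IntegrableOn F t.openHull) :
    IntegrableOn (fun z : ℝ × ℝ => z.2 * |t.cross| * F (duf t z)) sq01 := by
  have h1 : IntegrableOn (fun y => F (psi.symm y)) (psi '' t.openHull) := by
    rw [psi_mp.integrableOn_image psi.measurableEmbedding]
    convert! hF using 1
    ext x; simp
  rw [psi_image t h, integrableOn_image_iff_integrableOn_abs_det_fderiv_smul volume sq01_meas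
    (fun z _ => (dufD_has t z).hasFDerivWithinAt) (duf_inj t h)] at h1
  refine h1.congr_fun ?_ sq01_meas
  rintro z ⟨_, hz⟩
  simp only [dufD_det, psi_symm_dufC, abs_neg, abs_mul, abs_of_pos hz.1, smul_eq_mul]

lemma duffy_integral (t : Tri) (h : t.Nondeg) (F : Pt → ℝ) :
    ∫ x in t.openHull, F x = ∫ z in sq01, z.2 * |t.cross| * F (duf t z) := by
  have h1 := psi_mp.setIntegral_image_emb psi.measurableEmbedding (fun y => F (psi.symm y)) t.openHull
  simp only [MeasurableEquiv.symm_apply_apply] at h1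
  rw [← h1, psi_image t h, integral_image_eq_integral_abs_det_fderiv_smul volume sq01_meas
    (fun z _ => (dufD_has t z).hasFDerivWithinAt) (duf_inj t h)]
  refine setIntegral_congr_fun sq01_meas ?_
  rintro z ⟨_, hz⟩
  simp only [dufD_det, psi_symm_dufC, abs_neg, abs_mul, abs_of_pos hz.1, smul_eq_mul]

lemma open_isOpen (t : Tri) : IsOpen t.openHull := isOpen_interior

lemma hull_convex (t : Tri) : Convex ℝ t.closedHull := convex_convexHull ℝ _

lemma A_mem (t : Tri) : t.A ∈ t.closedHull := subset_convexHull ℝ _ (by simp)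
lemma B_mem (t : Tri) : t.B ∈ t.closedHull := subset_convexHull ℝ _ (by simp)
lemma C_mem (t : Tri) : t.C ∈ t.closedHull := subset_convexHull ℝ _ (by simp)

lemma edge_mem (t : Tri) {s : ℝ} (hs : s ∈ Icc (0:ℝ) 1) : t.B + s • (t.C - t.B) ∈ t.closedHull :=
  (hull_convex t).add_smul_sub_mem (B_mem t) (C_mem t) hs

lemma duf_mem (t : Tri) {s r : ℝ} (hs : s ∈ Icc (0:ℝ) 1) (hr : r ∈ Icc (0:ℝ) 1) :
    duf t (s, r) ∈ t.closedHull :=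
  (hull_convex t).add_smul_sub_mem (A_mem t) (edge_mem t hs) hr

structure H1T (t : Tri) (v : Pt → ℝ) : Prop where
  nd : t.Nondeg
  co : ContinuousOn v t.closedHull
  di : DifferentiableOn ℝ v t.openHull
  i0 : IntegrableOn (fun x => (v x) ^ 2) t.openHull
  i1 : IntegrableOn (fun x => ‖fderiv ℝ v x‖ ^ 2) t.openHull

lemma bdd_hull (t : Tri) : Bornology.IsBounded t.closedHull := by
  have : IsCompact t.closedHull := by
    unfold Tri.closedHull
    exact (Set.toFinite {t.A, t.B, t.C}).isCompact_convexHull ℝ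
  exact this.isBounded

lemma int_prod (t : Tri) (v : Pt → ℝ) (H : H1T t v) (P : Pt) :
    IntegrableOn (fun x => 2 * v x * fderiv ℝ v x (x - P)) t.openHull := by
  obtain ⟨R, hR⟩ := (bdd_hull t).exists_norm_le
  have hm : AEStronglyMeasurable (fun x => 2 * v x * fderiv ℝ v x (x - P)) (volume.restrict t.openHull) := by
    have m1 : AEStronglyMeasurable v (volume.restrict t.openHull) :=
      (H.co.mono interior_subset).aestronglyMeasurable (open_isOpen t).measurableSet
    have m2 : Measurable fun x => fderiv ℝ v x (x - P) := by
      have e : (fun x => fderiv ℝ v x (x - P)) = fun x => (x 0 - P 0) * fderiv ℝ v x (EuclideanSpace.single 0 1)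
          + (x 1 - P 1) * fderiv ℝ v x (EuclideanSpace.single 1 1) := by
        funext x
        rw [← smul_eq_mul, ← smul_eq_mul, ← map_smul, ← map_smul, ← map_add]
        congr 1
        ext i; fin_cases i <;> simp
      rw [e]
      have m0 := measurable_fderiv_apply_const ℝ v (EuclideanSpace.single (0 : Fin 2) (1:ℝ))
      have m1 := measurable_fderiv_apply_const ℝ v (EuclideanSpace.single (1 : Fin 2) (1:ℝ))
      have c0 : Measurable fun x : Pt => x 0 - P 0 := by fun_prop
      have c1 : Measurable fun x : Pt => x 1 - P 1 := by fun_prop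
      exact (c0.mul m0).add (c1.mul m1)
    exact (m1.const_mul 2).mul m2.aestronglyMeasurable
  refine Integrable.mono' (g := fun x => (R + ‖P‖) * (v x ^ 2 + ‖fderiv ℝ v x‖ ^ 2))
    ((H.i0.add H.i1).const_mul _) hm ?_
  refine (ae_restrict_iff' (open_isOpen t).measurableSet).2 (Filter.Eventually.of_forall fun x hx => ?_)
  have h1 : ‖x - P‖ ≤ R + ‖P‖ := (norm_sub_le _ _).trans (by gcongr; exact hR x (interior_subset hx))
  have h2 : |fderiv ℝ v x (x - P)| ≤ ‖fderiv ℝ v x‖ * (R + ‖P‖) :=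
    ((fderiv ℝ v x).le_opNorm _).trans (by gcongr)
  have h0 : 0 ≤ R + ‖P‖ := (norm_nonneg _).trans h1
  rw [Real.norm_eq_abs, abs_mul, abs_mul, abs_two]
  calc 2 * |v x| * |fderiv ℝ v x (x - P)| ≤ 2 * |v x| * (‖fderiv ℝ v x‖ * (R + ‖P‖)) := by gcongr
    _ = (R + ‖P‖) * (2 * |v x| * ‖fderiv ℝ v x‖) := by ring
    _ ≤ _ := by
      gcongr
      rw [← sq_abs (v x)]
      nlinarith [sq_nonneg (|v x| - ‖fderiv ℝ v x‖)]

lemma cone (t : Tri) (v : Pt → ℝ) (H : H1T t v) :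
    ∫ x in t.openHull, (2 * v x ^ 2 + 2 * v x * fderiv ℝ v x (x - t.A)) =
      |t.cross| * ∫ s in (0:ℝ)..1, v (t.B + s • (t.C - t.B)) ^ 2 := by
  have hI : IntegrableOn (fun x => 2 * v x ^ 2 + 2 * v x * fderiv ℝ v x (x - t.A)) t.openHull :=
    (H.i0.const_mul 2).add (int_prod t v H t.A)
  have hD := duffy_integrable t H.nd _ hI
  rw [duffy_integral t H.nd]
  have hD' : IntegrableOn (fun z : ℝ × ℝ => z.2 * |t.cross| * (2 * v (duf t z) ^ 2 + 2 * v (duf t z) * fderiv ℝ v (duf t z) (duf t z - t.A)))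
      (Ioo 0 1 ×ˢ Ioo 0 1) ((volume : Measure ℝ).prod (volume : Measure ℝ)) := hD
  have e := setIntegral_prod _ hD'
  refine Eq.trans e ?_
  rw [← intervalIntegral.integral_const_mul, intervalIntegral.integral_of_le zero_le_one,
    integral_Ioc_eq_integral_Ioo]
  have hae : ∀ᵐ s ∂(volume.restrict (Ioo (0:ℝ) 1)), IntegrableOn (fun r : ℝ => r * |t.cross| * (2 * v (duf t (s, r)) ^ 2 + 2 * v (duf t (s, r)) * fderiv ℝ v (duf t (s, r)) (duf t (s, r) - t.A))) (Ioo 0 1) := by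
    unfold IntegrableOn at hD'
    rw [← Measure.prod_restrict] at hD'
    exact hD'.prod_right_ae
  refine integral_congr_ae ?_
  filter_upwards [hae, ae_restrict_mem measurableSet_Ioo] with s hs hs01
  have hsI : s ∈ Icc (0:ℝ) 1 := ⟨hs01.1.le, hs01.2.le⟩
  rw [← integral_Ioc_eq_integral_Ioo, ← intervalIntegral.integral_of_le zero_le_one]
  rw [intervalIntegral.integral_eq_sub_of_hasDerivAt_of_le (f := fun r => |t.cross| * (r ^ 2 * v (duf t (s, r)) ^ 2)) zero_le_one]
  · simp [duf]
  · have : ContinuousOn (fun r => v (duf t (s, r))) (Icc 0 1) :=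
      H.co.comp (by unfold duf; fun_prop) (fun r hr => duf_mem t hsI hr)
    exact continuousOn_const.mul ((continuousOn_id.pow 2).mul (this.pow 2))
  · intro r hr
    have hx : duf t (s, r) ∈ t.openHull := by
      rw [← duf_image t H.nd]; exact ⟨_, ⟨hs01, hr⟩, rfl⟩
    have hv : HasFDerivAt v (fderiv ℝ v (duf t (s, r))) (duf t (s, r)) :=
      (H.di.differentiableAt ((open_isOpen t).mem_nhds hx)).hasFDerivAt
    have hd : HasDerivAt (fun r => duf t (s, r)) ((t.B + s • (t.C - t.B)) - t.A) r := by
      unfold duf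
      have := ((hasDerivAt_id r).smul_const ((t.B + s • (t.C - t.B)) - t.A)).const_add t.A
      simpa using this
    have hc : HasDerivAt (fun r => v (duf t (s, r))) _ r := hv.comp_hasDerivAt r hd
    have := (((hasDerivAt_pow 2 r).mul (hc.pow 2)).const_mul |t.cross|)
    convert! this using 1
    have : duf t (s, r) - t.A = r • ((t.B + s • (t.C - t.B)) - t.A) := by simp [duf]
    rw [this, map_smul]
    simp
    ring
  · rw [intervalIntegrable_iff_integrableOn_Ioo_of_le zero_le_one]
    exact hs


lemma H1T.rot {t : Tri} {v : Pt → ℝ} (H : H1T t v) (i : Fin 3) : H1T (rotT t i) v where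
  nd := by have := H.nd; unfold Tri.Nondeg at *; rwa [rot_cross]
  co := by rw [rot_hull]; exact H.co
  di := by rw [rot_open]; exact H.di
  i0 := by rw [rot_open]; exact H.i0
  i1 := by rw [rot_open]; exact H.i1

def EI (t : Tri) (v : Pt → ℝ) (i : Fin 3) : ℝ :=
  ∫ s in (0:ℝ)..1, v (eQ t i + s • (eR t i - eQ t i)) ^ 2

lemma EI_nonneg (t : Tri) (v : Pt → ℝ) (i : Fin 3) : 0 ≤ EI t v i :=
  intervalIntegral.integral_nonneg zero_le_one fun _ _ => sq_nonneg _

lemma cone' {t : Tri} {v : Pt → ℝ} (H : H1T t v) (i : Fin 3) :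
    ∫ x in t.openHull, (2 * v x ^ 2 + 2 * v x * fderiv ℝ v x (x - eP t i)) = |t.cross| * EI t v i := by
  have := cone (rotT t i) v (H.rot i)
  rwa [rot_open, rot_cross] at this

lemma ibp {t : Tri} {v : Pt → ℝ} (H : H1T t v) :
    ∫ x in t.openHull, (2 * v x ^ 2 + 2 * v x * fderiv ℝ v x x) = ∑ i, wt t i * EI t v i := by
  have h' : t.cross ≠ 0 := H.nd
  set l : Fin 3 → ℝ := fun i => cr0 (eQ t i) (eR t i) / t.cross with hl
  have hs : ∑ i, l i = 1 := by
    simp only [hl, Fin.sum_univ_three]; field_simp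
    simp [eQ, eR, rotT, cr0, Tri.cross]; ring
  have hP : ∑ i, l i • eP t i = 0 := by
    simp only [hl, Fin.sum_univ_three]
    ext k; fin_cases k
    · simp; field_simp; simp [eQ, eR, eP, rotT, cr0]; ring
    · simp; field_simp; simp [eQ, eR, eP, rotT, cr0]; ring
  have e : ∀ x, 2 * v x ^ 2 + 2 * v x * fderiv ℝ v x x
      = ∑ i, l i * (2 * v x ^ 2 + 2 * v x * fderiv ℝ v x (x - eP t i)) := by
    intro x
    have h1 : fderiv ℝ v x (∑ i, l i • eP t i) = 0 := by rw [hP, map_zero]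
    simp only [Fin.sum_univ_three, map_add, map_smul, smul_eq_mul, map_sub] at *
    linear_combination (- (2 * v x ^ 2 + 2 * v x * fderiv ℝ v x x)) * hs + 2 * v x * h1
  simp_rw [e]
  rw [integral_finsetSum]
  · refine Finset.sum_congr rfl fun i _ => ?_
    rw [integral_const_mul, cone' H i]
    simp only [hl, wt, sgnT]; field_simp
  · intro i _
    exact ((H.i0.const_mul 2).add (int_prod t v H _)).const_mul _

lemma trace_ineq {t : Tri} {v : Pt → ℝ} (H : H1T t v) (K M : ℝ) (hK0 : 0 ≤ K) (hK : t.shapeReg ≤ K)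
    (hM : ∀ x ∈ t.closedHull, ‖x‖ ≤ M) (i : Fin 3) :
    dist (eQ t i) (eR t i) ^ 2 * EI t v i ≤
      2 * K * (3 * (∫ x in t.openHull, v x ^ 2) + 4 * M ^ 2 * ∫ x in t.openHull, ‖fderiv ℝ v x‖ ^ 2) := by
  calc dist (eQ t i) (eR t i) ^ 2 * EI t v i ≤ (2 * K * |t.cross|) * EI t v i := by
        gcongr
        · exact EI_nonneg t v i
        · exact shape_edge t H.nd K hK i
    _ = 2 * K * (|t.cross| * EI t v i) := by ring
    _ ≤ _ := by
      gcongr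
      rw [← cone' H i, ← integral_const_mul, ← integral_const_mul, ← integral_add (H.i0.const_mul 3) (H.i1.const_mul _)]
      refine setIntegral_mono_on ((H.i0.const_mul 2).add (int_prod t v H _))
        ((H.i0.const_mul 3).add (H.i1.const_mul _)) (open_isOpen t).measurableSet fun x hx => ?_
      have hP : ‖eP t i‖ ≤ M := hM _ (by rw [← rot_hull t i]; exact A_mem _)
      have h1 : ‖x - eP t i‖ ≤ 2 * M := (norm_sub_le _ _).trans (by linarith [hM x (interior_subset hx)])
      have h2 : |fderiv ℝ v x (x - eP t i)| ≤ ‖fderiv ℝ v x‖ * (2 * M) :=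
        ((fderiv ℝ v x).le_opNorm _).trans (by gcongr)
      have h3 : (fderiv ℝ v x (x - eP t i)) ^ 2 ≤ (‖fderiv ℝ v x‖ * (2 * M)) ^ 2 := by
        rw [← sq_abs]; gcongr
      nlinarith [sq_nonneg (v x - fderiv ℝ v x (x - eP t i))]

lemma vol_ineq {t : Tri} {v : Pt → ℝ} (H : H1T t v) (M : ℝ)
    (hM : ∀ x ∈ t.closedHull, ‖x‖ ≤ M) :
    3 / 2 * (∫ x in t.openHull, v x ^ 2) ≤
      (∑ i, wt t i * EI t v i) + 2 * M ^ 2 * ∫ x in t.openHull, ‖fderiv ℝ v x‖ ^ 2 := by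
  have ip : IntegrableOn (fun x => 2 * v x * fderiv ℝ v x x) t.openHull := by
    simpa using int_prod t v H 0
  have iq : IntegrableOn (fun x => 2 * v x ^ 2 + 2 * v x * fderiv ℝ v x x) t.openHull :=
    (H.i0.const_mul 2).add ip
  rw [← ibp H, ← integral_const_mul, ← integral_const_mul, ← integral_add iq (H.i1.const_mul _)]
  refine setIntegral_mono_on (H.i0.const_mul _)
        (iq.add (H.i1.const_mul _)) (open_isOpen t).measurableSet fun x hx => ?_
  have h2 : |fderiv ℝ v x x| ≤ ‖fderiv ℝ v x‖ * M :=
        ((fderiv ℝ v x).le_opNorm _).trans (by gcongr; exact hM x (interior_subset hx))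
  have h3 : (fderiv ℝ v x x) ^ 2 ≤ (‖fderiv ℝ v x‖ * M) ^ 2 := by
        rw [← sq_abs]; gcongr
  nlinarith [sq_nonneg (v x + 2 * fderiv ℝ v x x)]

lemma edge_cont {t : Tri} {v : Pt → ℝ} (h : ContinuousOn v t.closedHull) (i : Fin 3) :
    ContinuousOn (fun s : ℝ => v (eQ t i + s • (eR t i - eQ t i))) (uIcc 0 1) := by
  rw [uIcc_of_le zero_le_one]
  refine h.comp (by fun_prop) fun s hs => ?_
  rw [← rot_hull t i]
  exact edge_mem (rotT t i) hs

lemma EI_same (t t' : Tri) (v : Pt → ℝ) (i j : Fin 3)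
    (hs : SameEdge (eQ t i, eR t i) (eQ t' j, eR t' j)) :
    EI t' v j = ∫ s in (0:ℝ)..1, v (eQ t i + s • (eR t i - eQ t i)) ^ 2 := by
  unfold EI
  rcases hs with hs | hs
  · obtain ⟨a, b⟩ := Prod.ext_iff.1 hs
    dsimp only at a b
    rw [a, b]
  · obtain ⟨a, b⟩ := Prod.ext_iff.1 hs
    dsimp only at a b
    rw [a, b]
    have := intervalIntegral.integral_comp_sub_left (a := 0) (b := 1)
      (fun s : ℝ => v (eQ t i + s • (eR t i - eQ t i)) ^ 2) 1
    simp only [sub_self, sub_zero] at this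
    rw [← this]
    congr 1; funext s
    congr 2
    module

def DI (t : Tri) (v v' : Pt → ℝ) (i : Fin 3) : ℝ :=
  ∫ s in (0:ℝ)..1, (v (eQ t i + s • (eR t i - eQ t i)) - v' (eQ t i + s • (eR t i - eQ t i))) ^ 2

lemma DI_nonneg (t : Tri) (v v' : Pt → ℝ) (i : Fin 3) : 0 ≤ DI t v v' i :=
  intervalIntegral.integral_nonneg zero_le_one fun _ _ => sq_nonneg _

lemma edge_cont' {t t' : Tri} {v : Pt → ℝ} (h : ContinuousOn v t'.closedHull) (i j : Fin 3)
    (hs : SameEdge (eQ t i, eR t i) (eQ t' j, eR t' j)) :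
    ContinuousOn (fun s : ℝ => v (eQ t i + s • (eR t i - eQ t i))) (uIcc 0 1) := by
  rw [uIcc_of_le zero_le_one]
  have hQ : eQ t' j ∈ t'.closedHull := by rw [← rot_hull t' j]; exact B_mem _
  have hR : eR t' j ∈ t'.closedHull := by rw [← rot_hull t' j]; exact C_mem _
  refine h.comp (by fun_prop) fun s hs' => ?_
  rcases hs with hs | hs
  · obtain ⟨a, b⟩ := Prod.ext_iff.1 hs
    dsimp only at a b
    rw [a] at hQ; rw [b] at hR
    exact (hull_convex t').add_smul_sub_mem hQ hR hs'
  · obtain ⟨a, b⟩ := Prod.ext_iff.1 hs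
    dsimp only at a b
    rw [a] at hQ; rw [b] at hR
    exact (hull_convex t').add_smul_sub_mem hR hQ hs'

lemma jump_ineq {t t' : Tri} {v v' : Pt → ℝ} (H : H1T t v) (H' : H1T t' v')
    (hd : t.openHull ∩ t'.openHull = ∅) (i j : Fin 3)
    (hs : SameEdge (eQ t i, eR t i) (eQ t' j, eR t' j)) (M ε : ℝ) (hε : 0 < ε)
    (hM : ∀ x ∈ t.closedHull, ‖x‖ ≤ M) :
    wt t i * EI t v i + wt t' j * EI t' v' j ≤
      M * (ε * (dist (eQ t i) (eR t i) ^ 2 * EI t v i + dist (eQ t' j) (eR t' j) ^ 2 * EI t' v' j)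
        + 1 / (2 * ε) * DI t v v' i) := by
  have hde : dist (eQ t' j) (eR t' j) = dist (eQ t i) (eR t i) := by
    rcases hs with hs | hs
    · obtain ⟨a, b⟩ := Prod.ext_iff.1 hs
      dsimp only at a b
      rw [a, b]
    · obtain ⟨a, b⟩ := Prod.ext_iff.1 hs
      dsimp only at a b
      rw [a, b, dist_comm]
  rw [hde, wt_opp t t' H.nd H'.nd hd i j hs, EI_same t t' v' i j hs]
  have hQ : ‖eQ t i‖ ≤ M := hM _ (by rw [← rot_hull t i]; exact B_mem _)
  have hM0 : 0 ≤ M := (norm_nonneg _).trans hQ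
  have hw := wt_le t H.nd i M hQ
  have c1 := edge_cont H.co i
  have c2 := edge_cont' H'.co i j hs
  unfold EI DI
  set d := dist (eQ t i) (eR t i)
  set w := wt t i
  set a : ℝ → ℝ := fun s => v (eQ t i + s • (eR t i - eQ t i)) with ha
  set b : ℝ → ℝ := fun s => v' (eQ t i + s • (eR t i - eQ t i)) with hb
  have ia : IntervalIntegrable (fun s => a s ^ 2) volume 0 1 := (c1.pow 2).intervalIntegrable
  have ib : IntervalIntegrable (fun s => b s ^ 2) volume 0 1 := (c2.pow 2).intervalIntegrable
  have iab : IntervalIntegrable (fun s => (a s - b s) ^ 2) volume 0 1 := ((c1.sub c2).pow 2).intervalIntegrable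
  change w * (∫ s in (0:ℝ)..1, a s ^ 2) + -w * (∫ s in (0:ℝ)..1, b s ^ 2) ≤
    M * (ε * (d ^ 2 * (∫ s in (0:ℝ)..1, a s ^ 2) + d ^ 2 * (∫ s in (0:ℝ)..1, b s ^ 2))
      + 1 / (2 * ε) * ∫ s in (0:ℝ)..1, (a s - b s) ^ 2)
  have eL : w * (∫ s in (0:ℝ)..1, a s ^ 2) + -w * (∫ s in (0:ℝ)..1, b s ^ 2) =
      ∫ s in (0:ℝ)..1, (w * a s ^ 2 + -w * b s ^ 2) := by
    rw [intervalIntegral.integral_add (ia.const_mul _) (ib.const_mul _),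
      intervalIntegral.integral_const_mul, intervalIntegral.integral_const_mul]
  have eR : M * (ε * (d ^ 2 * (∫ s in (0:ℝ)..1, a s ^ 2) + d ^ 2 * (∫ s in (0:ℝ)..1, b s ^ 2))
      + 1 / (2 * ε) * ∫ s in (0:ℝ)..1, (a s - b s) ^ 2) =
      ∫ s in (0:ℝ)..1, (M * ε * d ^ 2 * a s ^ 2 + M * ε * d ^ 2 * b s ^ 2 + M * (1 / (2 * ε)) * (a s - b s) ^ 2) := by
    rw [intervalIntegral.integral_add ((ia.const_mul _).add (ib.const_mul _)) (iab.const_mul _),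
      intervalIntegral.integral_add (ia.const_mul _) (ib.const_mul _),
      intervalIntegral.integral_const_mul, intervalIntegral.integral_const_mul,
      intervalIntegral.integral_const_mul]
    ring
  rw [eL, eR]
  refine intervalIntegral.integral_mono_on zero_le_one ((ia.const_mul _).add (ib.const_mul _))
    (((ia.const_mul _).add (ib.const_mul _)).add (iab.const_mul _)) fun s _ => ?_
  generalize a s = p
  generalize b s = q
  have h1 : w * p ^ 2 + -w * q ^ 2 ≤ M * d * (|p - q| * |p + q|) := by
    calc w * p ^ 2 + -w * q ^ 2 = w * ((p - q) * (p + q)) := by ring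
      _ ≤ |w * ((p - q) * (p + q))| := le_abs_self _
      _ = |w| * (|p - q| * |p + q|) := by rw [abs_mul, abs_mul]
      _ ≤ _ := by gcongr
  have h2 : d * (|p - q| * |p + q|) ≤ ε / 2 * d ^ 2 * (p + q) ^ 2 + 1 / (2 * ε) * (p - q) ^ 2 := by
    rw [← sq_abs (p + q), ← sq_abs (p - q)]
    have e : ε / 2 * d ^ 2 * |p + q| ^ 2 + 1 / (2 * ε) * |p - q| ^ 2 - d * (|p - q| * |p + q|)
      = 1 / (2 * ε) * (ε * d * |p + q| - |p - q|) ^ 2 := by field_simp; ring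
    have : 0 ≤ 1 / (2 * ε) * (ε * d * |p + q| - |p - q|) ^ 2 := by positivity
    linarith
  have h3 : (p + q) ^ 2 ≤ 2 * (p ^ 2 + q ^ 2) := by nlinarith [sq_nonneg (p - q)]
  calc _ ≤ M * d * (|p - q| * |p + q|) := h1
    _ = M * (d * (|p - q| * |p + q|)) := by ring
    _ ≤ M * (ε / 2 * d ^ 2 * (p + q) ^ 2 + 1 / (2 * ε) * (p - q) ^ 2) := by gcongr
    _ ≤ M * (ε / 2 * d ^ 2 * (2 * (p ^ 2 + q ^ 2)) + 1 / (2 * ε) * (p - q) ^ 2) := by gcongr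
    _ = _ := by ring

lemma sameEdge_trans {e e' e'' : Pt × Pt} (h : SameEdge e e') (h' : SameEdge e' e'') : SameEdge e e'' := by
  rcases h with rfl | rfl <;> rcases h' with rfl | rfl <;> simp [SameEdge]

lemma sum_same (t : Tri) (h : t.Nondeg) (e : Pt × Pt) (c : ℝ) :
    (∑ j : Fin 3, if SameEdge e (eQ t j, eR t j) then c else 0) =
      if ∃ e' ∈ t.edgeList, SameEdge e e' then c else 0 := by
  split_ifs with hc
  · obtain ⟨e', he', hs⟩ := hc
    obtain ⟨j, rfl⟩ := (mem_edgeList t e').1 he'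
    rw [Finset.sum_eq_single j]
    · simp [hs]
    · intro k _ hk
      rw [if_neg]
      intro hk'
      exact hk (edges_inj t h k j (sameEdge_trans (sameEdge_symm hk') hs))
    · simp
  · refine Finset.sum_eq_zero fun j _ => if_neg fun hj => hc ⟨_, (mem_edgeList t _).2 ⟨j, rfl⟩, hj⟩


def edg (p : Tri × Fin 3) : Pt × Pt := (eQ p.1 p.2, eR p.1 p.2)

def RelE (p q : Tri × Fin 3) : Prop := p.1 ≠ q.1 ∧ SameEdge (edg p) (edg q)

lemma relE_symm {p q : Tri × Fin 3} (h : RelE p q) : RelE q p := ⟨h.1.symm, sameEdge_symm h.2⟩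

def bdE (Ω : Set Pt) (p : Tri × Fin 3) : Prop := segment ℝ (eQ p.1 p.2) (eR p.1 p.2) ⊆ frontier Ω

def allE {Ω : Set Pt} (T : Triangulation Ω) : Finset (Tri × Fin 3) := T.tris ×ˢ Finset.univ

def intE {Ω : Set Pt} (T : Triangulation Ω) : Finset (Tri × Fin 3) := (allE T).filter fun p => ¬ bdE Ω p

lemma partner {Ω : Set Pt} (T : Triangulation Ω) {p : Tri × Fin 3} (hp : p ∈ intE T) :
    ∃ q ∈ intE T, RelE p q ∧ ∀ q' ∈ intE T, RelE p q' → q' = q := by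
  obtain ⟨hp1, hp2⟩ := Finset.mem_filter.1 hp
  have hpt : p.1 ∈ T.tris := (Finset.mem_product.1 hp1).1
  rcases T.conforming p.1 hpt (edg p) ((mem_edgeList _ _).2 ⟨p.2, rfl⟩) with h | ⟨t', ht', hne, e', he', hs⟩
  · exact absurd h hp2
  · obtain ⟨j, rfl⟩ := (mem_edgeList t' e').1 he'
    have hrel : RelE p (t', j) := ⟨hne.symm, hs⟩
    refine ⟨(t', j), Finset.mem_filter.2 ⟨Finset.mem_product.2 ⟨ht', Finset.mem_univ _⟩, ?_⟩, hrel, ?_⟩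
    · intro hb
      apply hp2
      unfold bdE at *
      rcases hs with hs | hs
      · obtain ⟨a, b⟩ := Prod.ext_iff.1 hs
        dsimp only [edg] at a b
        rwa [← a, ← b]
      · obtain ⟨a, b⟩ := Prod.ext_iff.1 hs
        dsimp only [edg] at a b
        rwa [← a, ← b, segment_symm]
    · rintro ⟨t'', k⟩ hq ⟨hq1, hq2⟩
      have hq' : t'' ∈ T.tris := (Finset.mem_product.1 (Finset.mem_filter.1 hq).1).1
      have htt : t'' = t' := by
        by_contra hc
        exact three_excl p.1 t' t'' (T.nondeg _ hpt) (T.nondeg _ ht') (T.nondeg _ hq')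
          (T.disj _ hpt _ ht' hne.symm) (T.disj _ hpt _ hq' hq1) (T.disj _ ht' _ hq' (Ne.symm hc))
          p.2 j k hs hq2
      subst htt
      rw [edges_inj t'' (T.nondeg _ ht') k j (sameEdge_trans (sameEdge_symm hq2) hs)]

lemma sum_partner {Ω : Set Pt} (T : Triangulation Ω) (f : Tri × Fin 3 → ℝ) :
    (∑ p ∈ intE T, ∑ q ∈ intE T, if RelE p q then f p else 0) = ∑ p ∈ intE T, f p := by
  refine Finset.sum_congr rfl fun p hp => ?_
  obtain ⟨q, hq, hr, hu⟩ := partner T hp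
  rw [Finset.sum_eq_single q]
  · simp [hr]
  · intro q' hq' hne
    exact if_neg fun h => hne (hu q' hq' h)
  · exact fun h => absurd hq h

lemma sum_partner' {Ω : Set Pt} (T : Triangulation Ω) (f : Tri × Fin 3 → ℝ) :
    (∑ p ∈ intE T, ∑ q ∈ intE T, if RelE p q then f q else 0) = ∑ p ∈ intE T, f p := by
  rw [Finset.sum_comm, ← sum_partner T f]
  refine Finset.sum_congr rfl fun p _ => Finset.sum_congr rfl fun q _ => ?_
  by_cases h : RelE p q
  · rw [if_pos h, if_pos (relE_symm h)]
  · rw [if_neg h, if_neg (fun h' => h (relE_symm h'))]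

lemma jumpSq_eq {Ω : Set Pt} (T : Triangulation Ω) (u : Tri → Pt → ℝ) :
    2 * T.jumpSq u = ∑ p ∈ allE T, ∑ q ∈ allE T, if RelE p q then DI p.1 (u p.1) (u q.1) p.2 else 0 := by
  unfold Triangulation.jumpSq allE
  rw [Finset.sum_product, ← mul_assoc, show (2:ℝ) * (1/2) = 1 by norm_num, one_mul]
  refine Finset.sum_congr rfl fun t ht => ?_
  simp_rw [Finset.sum_product]
  rw [Finset.sum_comm]
  refine Finset.sum_congr rfl fun t' ht' => ?_
  split_ifs with hne
  · unfold Triangulation.edgeJump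
    rw [list_sum]
    refine Finset.sum_congr rfl fun i _ => ?_
    have hd := edge_pos t (T.nondeg t ht) i
    have e : (dist (eQ t i) (eR t i))⁻¹ * segInt (eQ t i) (eR t i) (fun x => (u t x - u t' x) ^ 2)
       = DI t (u t) (u t') i := by
      unfold segInt DI
      rw [← mul_assoc, inv_mul_cancel₀ hd.ne', one_mul]
    rw [e, ← sum_same t' (T.nondeg t' ht')]
    refine Finset.sum_congr rfl fun j _ => ?_
    simp [RelE, edg, hne]
  · simp only [ne_eq, not_not] at hne
    subst hne
    simp [RelE]

lemma jump_sum_le {Ω : Set Pt} (T : Triangulation Ω) (u : Tri → Pt → ℝ) :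
    (∑ p ∈ intE T, ∑ q ∈ intE T, if RelE p q then DI p.1 (u p.1) (u q.1) p.2 else 0) ≤ 2 * T.jumpSq u := by
  rw [jumpSq_eq]
  have hn : ∀ p q : Tri × Fin 3, 0 ≤ if RelE p q then DI p.1 (u p.1) (u q.1) p.2 else 0 := by
    intro p q; split_ifs
    · exact DI_nonneg _ _ _ _
    · exact le_rfl
  have hsub : intE T ⊆ allE T := Finset.filter_subset _ _
  calc _ ≤ ∑ p ∈ intE T, ∑ q ∈ allE T, if RelE p q then DI p.1 (u p.1) (u q.1) p.2 else 0 :=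
        Finset.sum_le_sum fun p _ => Finset.sum_le_sum_of_subset_of_nonneg hsub fun q _ _ => hn p q
    _ ≤ _ := Finset.sum_le_sum_of_subset_of_nonneg hsub fun p _ _ => Finset.sum_nonneg fun q _ => hn p q

lemma bdry_eq {Ω : Set Pt} (T : Triangulation Ω) (u : Tri → Pt → ℝ) :
    T.bdrySq u = ∑ p ∈ (allE T).filter (bdE Ω), dist (eQ p.1 p.2) (eR p.1 p.2) * EI p.1 (u p.1) p.2 := by
  unfold Triangulation.bdrySq
  rw [Finset.sum_filter, allE, Finset.sum_product]
  refine Finset.sum_congr rfl fun t _ => ?_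
  rw [list_sum]
  rfl

lemma hull_bound {Ω : Set Pt} (T : Triangulation Ω) (M : ℝ) (hM : ∀ x ∈ Ω, ‖x‖ ≤ M) (t : Tri) (ht : t ∈ T.tris) :
    ∀ x ∈ t.closedHull, ‖x‖ ≤ M := by
  have h1 : t.openHull ⊆ Ω := by
    rw [T.cover]
    exact interior_mono (subset_biUnion_of_mem (u := fun t : Tri => t.closedHull) ht)
  have hne : (interior t.closedHull).Nonempty := by
    change t.openHull.Nonempty
    rw [← duf_image t (T.nondeg t ht)]
    exact ⟨_, (1/2, 1/2), by simp [sq01]; norm_num, rfl⟩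
  have h2 : closure (interior t.closedHull) = closure t.closedHull :=
    (hull_convex t).closure_interior_eq_closure_of_nonempty_interior hne
  have h3 : t.closedHull ⊆ closure (interior t.closedHull) := h2 ▸ subset_closure
  intro x hx
  have : closure (interior t.closedHull) ⊆ {x | ‖x‖ ≤ M} :=
    closure_minimal (fun y hy => hM y (h1 hy)) (isClosed_le continuous_norm continuous_const)
  exact this (h3 hx)

lemma main_ineq {Ω : Set Pt} (T : Triangulation Ω) (u : Tri → Pt → ℝ) (hu : T.PwH1 u) (K M : ℝ)
    (hK0 : 0 < K) (hM0 : 0 < M) (hK : T.ShapeRegular K) (hM : ∀ x ∈ Ω, ‖x‖ ≤ M) :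
    3 / 2 * T.sqL2 u ≤ 2 * M ^ 2 * T.gradSq u + M * T.bdrySq u +
      (1 / 2 * T.sqL2 u + 2 * M ^ 2 / 3 * T.gradSq u + 18 * M ^ 2 * K * T.jumpSq u) := by
  have H : ∀ t ∈ T.tris, H1T t (u t) := fun t ht =>
    ⟨T.nondeg t ht, (hu t ht).1, (hu t ht).2.1, (hu t ht).2.2.1, (hu t ht).2.2.2⟩
  have HM := hull_bound T M hM
  have mem : ∀ p ∈ allE T, p.1 ∈ T.tris := fun p hp => (Finset.mem_product.1 hp).1
  have memi : ∀ p ∈ intE T, p.1 ∈ T.tris := fun p hp => mem p (Finset.mem_filter.1 hp).1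
  have s1 : 3 / 2 * T.sqL2 u ≤ (∑ p ∈ allE T, wt p.1 p.2 * EI p.1 (u p.1) p.2) + 2 * M ^ 2 * T.gradSq u := by
    unfold Triangulation.sqL2 Triangulation.gradSq allE
    rw [Finset.sum_product, Finset.mul_sum, Finset.mul_sum, ← Finset.sum_add_distrib]
    exact Finset.sum_le_sum fun t ht => vol_ineq (H t ht) M (HM t ht)
  have s2 : (∑ p ∈ allE T, wt p.1 p.2 * EI p.1 (u p.1) p.2) =
      (∑ p ∈ (allE T).filter (bdE Ω), wt p.1 p.2 * EI p.1 (u p.1) p.2) +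
      ∑ p ∈ intE T, wt p.1 p.2 * EI p.1 (u p.1) p.2 :=
    (Finset.sum_filter_add_sum_filter_not _ _ _).symm
  have s3 : (∑ p ∈ (allE T).filter (bdE Ω), wt p.1 p.2 * EI p.1 (u p.1) p.2) ≤ M * T.bdrySq u := by
    rw [bdry_eq, Finset.mul_sum]
    refine Finset.sum_le_sum fun p hp => ?_
    have hp := mem p (Finset.mem_filter.1 hp).1
    rw [← mul_assoc]
    refine mul_le_mul_of_nonneg_right ((le_abs_self _).trans (wt_le p.1 (T.nondeg _ hp) p.2 M ?_)) (EI_nonneg _ _ _)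
    exact HM _ hp _ (by rw [← rot_hull p.1 p.2]; exact B_mem _)
  have s5 : (∑ p ∈ intE T, dist (eQ p.1 p.2) (eR p.1 p.2) ^ 2 * EI p.1 (u p.1) p.2) ≤
      6 * K * (3 * T.sqL2 u + 4 * M ^ 2 * T.gradSq u) := by
    calc _ ≤ ∑ p ∈ allE T, dist (eQ p.1 p.2) (eR p.1 p.2) ^ 2 * EI p.1 (u p.1) p.2 :=
          Finset.sum_le_sum_of_subset_of_nonneg (Finset.filter_subset _ _)
            fun p _ _ => mul_nonneg (sq_nonneg _) (EI_nonneg _ _ _)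
      _ ≤ _ := by
        unfold Triangulation.sqL2 Triangulation.gradSq allE
        rw [Finset.sum_product, Finset.mul_sum, Finset.mul_sum, ← Finset.sum_add_distrib, Finset.mul_sum]
        refine Finset.sum_le_sum fun t ht => ?_
        refine (Finset.sum_le_sum fun i _ => trace_ineq (H t ht) K M hK0.le (hK t ht) (HM t ht) i).trans ?_
        rw [Finset.sum_const]
        simp
        apply le_of_eq; ring
  set ε : ℝ := 1 / (36 * M * K) with hε
  have hε0 : 0 < ε := by positivity
  have s4 : (∑ p ∈ intE T, wt p.1 p.2 * EI p.1 (u p.1) p.2) ≤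
      M * ε * (∑ p ∈ intE T, dist (eQ p.1 p.2) (eR p.1 p.2) ^ 2 * EI p.1 (u p.1) p.2) +
       M / (2 * ε) * T.jumpSq u := by
    set g : Tri × Fin 3 → ℝ := fun p => wt p.1 p.2 * EI p.1 (u p.1) p.2 with hg
    set k : Tri × Fin 3 → ℝ := fun p => dist (eQ p.1 p.2) (eR p.1 p.2) ^ 2 * EI p.1 (u p.1) p.2 with hk
    have e : 2 * ∑ p ∈ intE T, g p = ∑ p ∈ intE T, ∑ q ∈ intE T, if RelE p q then g p + g q else 0 := by
      have : ∀ p q, (if RelE p q then g p + g q else 0) = (if RelE p q then g p else 0) + (if RelE p q then g q else 0) := by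
        intro p q; split_ifs <;> simp
      simp_rw [this, Finset.sum_add_distrib]
      rw [sum_partner, sum_partner']; ring
    have le1 : (∑ p ∈ intE T, ∑ q ∈ intE T, if RelE p q then g p + g q else 0) ≤
        ∑ p ∈ intE T, ∑ q ∈ intE T, (M * ε * ((if RelE p q then k p else 0) + (if RelE p q then k q else 0))
          + M * (1 / (2 * ε)) * (if RelE p q then DI p.1 (u p.1) (u q.1) p.2 else 0)) := by
      refine Finset.sum_le_sum fun p hp => Finset.sum_le_sum fun q hq => ?_
      split_ifs with h
      · have := jump_ineq (H _ (memi p hp)) (H _ (memi q hq)) (T.disj _ (memi p hp) _ (memi q hq) h.1)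
          p.2 q.2 h.2 M ε hε0 (HM _ (memi p hp))
        refine this.trans (le_of_eq ?_)
        simp only [hk]; ring
      · simp
    simp_rw [Finset.sum_add_distrib, ← Finset.mul_sum, Finset.sum_add_distrib] at le1
    rw [sum_partner, sum_partner'] at le1
    have le2 := mul_le_mul_of_nonneg_left (jump_sum_le T u) (show 0 ≤ M * (1 / (2 * ε)) by positivity)
    have e3 : M * (1 / (2 * ε)) * (2 * T.jumpSq u) = 2 * (M / (2 * ε) * T.jumpSq u) := by ring
    linarith
  have s6 := mul_le_mul_of_nonneg_left s5 (show 0 ≤ M * ε by positivity)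
  have e1 : M * ε * (6 * K * (3 * T.sqL2 u + 4 * M ^ 2 * T.gradSq u)) =
     1 / 2 * T.sqL2 u + 2 * M ^ 2 / 3 * T.gradSq u := by
    rw [hε]; field_simp; ring
  have e2 : M / (2 * ε) * T.jumpSq u = 18 * M ^ 2 * K * T.jumpSq u := by
    rw [hε]; field_simp; ring
  linarith

/-- Poincaré–Friedrichs inequality with boundary term:
`‖u‖²_{L²(Ω)} ≤ C (∫_{Ω_h}|∇u|² + Σ_{e∈ℰ⁰_h}|e|⁻¹∫_e[u]² + ∫_{∂Ω}u²)` for all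
`u ∈ H¹_h`, with `C` depending only on `Ω` and the shape regularity constant `𝒦`. -/
theorem poincare_friedrichs_boundary (Ω : Set Pt) (hΩ : IsPolygon Ω) (K : ℝ) :
    ∃ C : ℝ, 0 < C ∧ ∀ T : Triangulation Ω, T.ShapeRegular K →
      ∀ u : Tri → Pt → ℝ, T.PwH1 u →
        T.sqL2 u ≤ C * (T.gradSq u + T.jumpSq u + T.bdrySq u) := by
  obtain ⟨M0, hM0⟩ := hΩ.2.1.exists_norm_le
  set M := |M0| + 1 with hMd
  set K' := |K| + 1 with hKd
  have hMp : 0 < M := by positivity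
  have hKp : 0 < K' := by positivity
  refine ⟨3 * M ^ 2 + M + 18 * M ^ 2 * K', by positivity, fun T hT u hu => ?_⟩
  have h := main_ineq T u hu K' M hKp hMp
    (fun t ht => (hT t ht).trans (by linarith [le_abs_self K]))
    (fun x hx => (hM0 x hx).trans (by linarith [le_abs_self M0]))
  have hG : 0 ≤ T.gradSq u := Finset.sum_nonneg fun t _ => integral_nonneg fun x => sq_nonneg _
  have hB : 0 ≤ T.bdrySq u := by
    rw [bdry_eq]
    exact Finset.sum_nonneg fun p _ => mul_nonneg dist_nonneg (EI_nonneg _ _ _)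
  have hJ : 0 ≤ T.jumpSq u := by
    have h1 : 0 ≤ ∑ p ∈ intE T, ∑ q ∈ intE T, if RelE p q then DI p.1 (u p.1) (u q.1) p.2 else 0 :=
      Finset.sum_nonneg fun p _ => Finset.sum_nonneg fun q _ => by
        split_ifs
        · exact DI_nonneg _ _ _ _
        · exact le_rfl
    linarith [jump_sum_le T u]
  have a1 : 0 ≤ M ^ 2 * K' := by positivity
  have a2 : 0 ≤ M ^ 2 := by positivity
  have p1 := mul_nonneg a1 hG
  have p2 := mul_nonneg a1 hB
  have p3 := mul_nonneg a2 hJ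
  have p4 := mul_nonneg a2 hB
  have p5 := mul_nonneg hMp.le hG
  have p6 := mul_nonneg hMp.le hJ
  have p7 := mul_nonneg a2 hG
  linarith
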